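/- Let v_1, …, v_m ∈ ℤ^n be pairwise distinct primitive vectors, λ_1, …, λ_m ∈ ℝ, and l_j(u) = ⟨u, v_j⟩ − λ_j. For each j let (δ_j^{(i)})_{i∈ℕ} be a sequence of real numbers converging to 0, and set l_j^{(i)} = l_j + δ_j^{(i)}. Fix w ∈ ℤ^n such that the index set J_w = {j : ⟨w, v_j⟩ ≠ 0} has at least two elements. Let Trop(P, w) = {u ∈ ℝ^n : the minimum of {l_j(u) : j ∈ J_w} is attained by at least two distinct indices in J_w} and Trop(P^{(i)}, w) = {u ∈ ℝ^n : the minimum of {l_j^{(i)}(u) : j ∈ J_w} is attained by at least two distinct indices in J_w}. Then these sets are nonempty and Trop(P^{(i)}, w) converges to Trop(P, w) with respect to the Hausdorff distance: for every ε > 0 there exists N such that for all i ≥ N, every point of Trop(P, w) is within distance ε of some point of Trop(P^{(i)}, w) and conversely. -/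

import Mathlib

open scoped Classical

noncomputable section

/-- Integer inner product `⟨w, v⟩ = ∑ i, w i * v i` on `ℤ^n`. -/
def zdot {n : ℕ} (w v : Fin n → ℤ) : ℤ := ∑ i, w i * v i

/-- A lattice vector is primitive if the gcd of its entries is `1`. -/
def Primitive {n : ℕ} (w : Fin n → ℤ) : Prop := Finset.univ.gcd w = 1

/-- The affine function `l_j(u) = ⟨u, v_j⟩ - λ_j` on Euclidean space. -/
def lfE {n m : ℕ} (v : Fin m → Fin n → ℤ) (lam : Fin m → ℝ) (j : Fin m)
    (u : EuclideanSpace ℝ (Fin n)) : ℝ :=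
  (∑ i, u i * (v j i : ℝ)) - lam j

/-- The tropicalization of the family `{l_1, …, l_s}`: the set of points at which the pointwise
minimum of the family is attained by at least two distinct indices. -/
def TropAll {n s : ℕ} (v : Fin s → Fin n → ℤ) (lam : Fin s → ℝ) :
    Set (EuclideanSpace ℝ (Fin n)) :=
  {u | ∃ j₁ j₂ : Fin s, j₁ ≠ j₂ ∧ lfE v lam j₁ u = lfE v lam j₂ u ∧
        ∀ j : Fin s, lfE v lam j₁ u ≤ lfE v lam j u}

/-- The tropicalization of `P` relative to the lattice vector `w` (Euclidean version): the set
of points at which the minimum of `{l_j(u) : j ∈ J_w}` is attained by at least two distinct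
indices of `J_w = {j : ⟨w, v_j⟩ ≠ 0}`. -/
def TropRelE {n m : ℕ} (v : Fin m → Fin n → ℤ) (lam : Fin m → ℝ) (w : Fin n → ℤ) :
    Set (EuclideanSpace ℝ (Fin n)) :=
  {u | ∃ j₁ j₂ : Fin m, j₁ ≠ j₂ ∧ zdot w (v j₁) ≠ 0 ∧ zdot w (v j₂) ≠ 0 ∧
        lfE v lam j₁ u = lfE v lam j₂ u ∧
        ∀ j : Fin m, zdot w (v j) ≠ 0 → lfE v lam j₁ u ≤ lfE v lam j u}

/-!
At a point `u` where two of the affine functions nearly attain the minimum, move along the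
difference `d` of their gradients: one of the two drops below the other at `u - t • d`, the other
one at `u + t • d`, and no single function of the family can be minimal at both ends once
`t * ‖d‖ ^ 2` exceeds the total defect of minimality of the two at `u`. By connectedness, the
minimum is then attained twice at some point of the ball of radius `t * ‖d‖` around `u`. If the
constants move by at most `η`, the defect is at most `4 * η`, and `‖d‖` is bounded below by the
separation of the gradients.
-/

open Filter Topology
open scoped RealInnerProductSpace

section TropLocus

variable {X ι β : Type*} [LinearOrder β]

/-- The tropical locus of a family of functions `f i`, `i ∈ J`: the set of points at which the
minimum over `J` is attained by two distinct indices. It generalises `TropRelE` to arbitrary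
functions. -/
def tropLocus (J : Set ι) (f : ι → X → β) : Set X :=
  {x | ∃ j ∈ J, ∃ k ∈ J, j ≠ k ∧ IsMinOn (f · x) J j ∧ IsMinOn (f · x) J k}

variable [TopologicalSpace X] [TopologicalSpace β] [OrderClosedTopology β]
  {J : Set ι} {f : ι → X → β}

lemma isClosed_setOf_isMinOn (hf : ∀ i ∈ J, Continuous (f i)) {k : ι} (hk : k ∈ J) :
    IsClosed {x | IsMinOn (f · x) J k} := by
  simp only [isMinOn_iff, Set.ofPred_forall]
  exact isClosed_biInter fun i hi => isClosed_le (hf k hk) (hf i hi)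

lemma exists_mem_tropLocus_of_isPreconnected {S : Set X} (hS : IsPreconnected S)
    (hJ : J.Finite) (hf : ∀ i ∈ J, Continuous (f i)) {j k : ι} (hj : j ∈ J) (hk : k ∈ J)
    (hjk : j ≠ k) {x y : X} (hx : x ∈ S) (hy : y ∈ S) (hxj : IsMinOn (f · x) J j)
    (hyk : IsMinOn (f · y) J k) : ∃ z ∈ S, z ∈ tropLocus J f := by
  let others : Set X := ⋃ i ∈ J \ {j}, {z | IsMinOn (f · z) J i}
  have isClosed_others : IsClosed others :=
    hJ.sdiff.isClosed_biUnion fun i hi => isClosed_setOf_isMinOn hf hi.1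
  have covered : S ⊆ {z | IsMinOn (f · z) J j} ∪ others := by
    intro z _
    obtain ⟨i, hi, hzi⟩ := Set.exists_min_image J (f · z) hJ ⟨j, hj⟩
    rcases eq_or_ne i j with rfl | hij
    · exact Or.inl hzi
    · exact Or.inr (Set.mem_biUnion ⟨hi, hij⟩ hzi)
  obtain ⟨z, hzS, hzj, hz⟩ := isPreconnected_closed_iff.mp hS _ _
    (isClosed_setOf_isMinOn hf hj) isClosed_others covered ⟨x, hx, hxj⟩
    ⟨y, hy, Set.mem_biUnion ⟨hk, hjk.symm⟩ hyk⟩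
  obtain ⟨i, ⟨hi, hij⟩, hzi⟩ := Set.mem_iUnion₂.mp hz
  exact ⟨z, hzS, j, hj, i, hi, Ne.symm hij, hzj, hzi⟩

end TropLocus

section AffineFamily

variable {E ι : Type*} [NormedAddCommGroup E] [InnerProductSpace ℝ E]
  {J : Set ι} {a : ι → E} {c c' : ι → ℝ} {j k : ι} {u : E} {r : ℝ}

/-- The family of affine functions `u ↦ ⟪u, a i⟫ - c i` with gradients `a i`; it is `lfE` on an
arbitrary real inner product space. -/
def affineFamily (a : ι → E) (c : ι → ℝ) (i : ι) (u : E) : ℝ :=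
  ⟪u, a i⟫ - c i

lemma continuous_affineFamily (a : ι → E) (c : ι → ℝ) (i : ι) :
    Continuous (affineFamily a c i) := by
  unfold affineFamily
  fun_prop

lemma affineFamily_add (a : ι → E) (c : ι → ℝ) (i : ι) (u d : E) :
    affineFamily a c i (u + d) = affineFamily a c i u + ⟪d, a i⟫ := by
  rw [affineFamily, affineFamily, inner_add_left]
  ring

lemma affineFamily_eq_add_sub (a : ι → E) (c c' : ι → ℝ) (i : ι) (u : E) :
    affineFamily a c' i u = affineFamily a c i u + (c i - c' i) := by
  rw [affineFamily, affineFamily]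
  ring

lemma mul_norm_sq_le_of_isMinOn_of_isMinOn {i : ι} {t : ℝ} (hj : j ∈ J) (hk : k ∈ J)
    (hadd : IsMinOn (affineFamily a c · (u + t • (a k - a j))) J i)
    (hsub : IsMinOn (affineFamily a c · (u + (-t) • (a k - a j))) J i) :
    t * ‖a k - a j‖ ^ 2 ≤
      affineFamily a c j u + affineFamily a c k u - 2 * affineFamily a c i u := by
  have h_add := isMinOn_iff.mp hadd j hj
  have h_sub := isMinOn_iff.mp hsub k hk
  simp only [affineFamily_add, real_inner_smul_left] at h_add h_sub
  have norm_sq_eq : ‖a k - a j‖ ^ 2 = ⟪a k - a j, a k⟫ - ⟪a k - a j, a j⟫ := by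
    rw [← real_inner_self_eq_norm_sq, ← inner_sub_right]
  rw [norm_sq_eq]
  linarith

lemma exists_mem_tropLocus_dist_le (hJ : J.Finite) (hj : j ∈ J) (hk : k ∈ J)
    (hr : ∀ i ∈ J, affineFamily a c j u + affineFamily a c k u - 2 * affineFamily a c i u <
      r * ‖a k - a j‖) :
    ∃ u' ∈ tropLocus J (affineFamily a c), dist u u' ≤ r := by
  set d := a k - a j with hd
  have mul_norm_pos : 0 < r * ‖d‖ := by linarith [hr j hj, hr k hk]
  have r_pos : 0 < r := pos_of_mul_pos_left mul_norm_pos (norm_nonneg d)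
  have norm_pos : 0 < ‖d‖ := pos_of_mul_pos_right mul_norm_pos r_pos.le
  let t := r / ‖d‖
  have t_mul_norm : t * ‖d‖ = r := div_mul_cancel₀ r norm_pos.ne'
  have norm_t_smul : ‖t • d‖ = r := by
    rw [norm_smul, Real.norm_of_nonneg (by positivity), t_mul_norm]
  obtain ⟨p, hp, hp_min⟩ := Set.exists_min_image J (affineFamily a c · (u + t • d)) hJ ⟨j, hj⟩
  obtain ⟨q, hq, hq_min⟩ := Set.exists_min_image J (affineFamily a c · (u + (-t) • d)) hJ ⟨j, hj⟩
  have p_ne_q : p ≠ q := by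
    rintro rfl
    have := mul_norm_sq_le_of_isMinOn_of_isMinOn hj hk hp_min hq_min
    rw [← hd, sq, ← mul_assoc, t_mul_norm] at this
    exact this.not_gt (hr p hp)
  obtain ⟨u', hu', hu'_mem⟩ := exists_mem_tropLocus_of_isPreconnected
    (convex_closedBall u r).isPreconnected hJ (fun i _ => continuous_affineFamily a c i) hp hq
    p_ne_q (by simp [norm_t_smul]) (by simp [norm_t_smul]) hp_min hq_min
  exact ⟨u', hu'_mem, Metric.mem_closedBall'.mp hu'⟩

lemma tropLocus_affineFamily_nonempty (hJ : J.Finite) (hj : j ∈ J) (hk : k ∈ J)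
    (hjk : a j ≠ a k) (c : ι → ℝ) : (tropLocus J (affineFamily a c)).Nonempty := by
  let defect : ι → ℝ := fun i =>
    affineFamily a c j 0 + affineFamily a c k 0 - 2 * affineFamily a c i 0
  obtain ⟨B, hB⟩ := (hJ.image defect).bddAbove
  have norm_pos : 0 < ‖a k - a j‖ := norm_sub_pos_iff.mpr hjk.symm
  have defect_lt (i : ι) (hi : i ∈ J) : defect i < (B + 1) / ‖a k - a j‖ * ‖a k - a j‖ := by
    rw [div_mul_cancel₀ _ norm_pos.ne']
    linarith [hB (Set.mem_image_of_mem defect hi)]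
  obtain ⟨u, hu, -⟩ := exists_mem_tropLocus_dist_le hJ hj hk defect_lt
  exact ⟨u, hu⟩

lemma exists_mem_tropLocus_dist_le_of_abs_sub_le {η : ℝ} (hJ : J.Finite) (ha : J.InjOn a)
    (hc : ∀ i ∈ J, |c i - c' i| ≤ η) (hr : 4 * η < r * (a '' J).infsep)
    (hu : u ∈ tropLocus J (affineFamily a c)) :
    ∃ u' ∈ tropLocus J (affineFamily a c'), dist u u' ≤ r := by
  obtain ⟨j, hj, k, hk, hjk, hj_min, hk_min⟩ := hu
  have η_nonneg : 0 ≤ η := (abs_nonneg _).trans (hc j hj)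
  have r_pos : 0 < r := pos_of_mul_pos_left (by linarith) (a '' J).infsep_nonneg
  have infsep_le : (a '' J).infsep ≤ ‖a k - a j‖ := by
    rw [← dist_eq_norm]
    exact Set.infsep_le_dist_of_mem (Set.mem_image_of_mem a hk) (Set.mem_image_of_mem a hj)
      (ha.ne hk hj hjk.symm)
  refine exists_mem_tropLocus_dist_le hJ hj hk fun i hi => ?_
  calc affineFamily a c' j u + affineFamily a c' k u - 2 * affineFamily a c' i u
      ≤ 4 * η := by
        simp only [affineFamily_eq_add_sub a c c']
        linarith [isMinOn_iff.mp hj_min i hi, isMinOn_iff.mp hk_min i hi,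
          (abs_le.mp (hc i hi)).1, (abs_le.mp (hc j hj)).2, (abs_le.mp (hc k hk)).2]
    _ < r * (a '' J).infsep := hr
    _ ≤ r * ‖a k - a j‖ := by gcongr

theorem statement10_general {κ : Type*} {l : Filter κ} (hJ : J.Finite) (hJ₂ : J.Nontrivial)
    (ha : J.InjOn a) (c : ι → ℝ) {δ : κ → ι → ℝ}
    (hδ : ∀ i ∈ J, Tendsto (fun s => δ s i) l (𝓝 0)) :
    (tropLocus J (affineFamily a c)).Nonempty ∧
    (∀ s, (tropLocus J (affineFamily a fun i => c i - δ s i)).Nonempty) ∧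
    ∀ ε > (0 : ℝ), ∀ᶠ s in l,
      (∀ u₁ ∈ tropLocus J (affineFamily a c),
        ∃ u₂ ∈ tropLocus J (affineFamily a fun i => c i - δ s i), dist u₁ u₂ ≤ ε) ∧
      (∀ u₂ ∈ tropLocus J (affineFamily a fun i => c i - δ s i),
        ∃ u₁ ∈ tropLocus J (affineFamily a c), dist u₁ u₂ ≤ ε) := by
  have ⟨j, hj, k, hk, hjk⟩ := hJ₂
  have nonempty := tropLocus_affineFamily_nonempty hJ hj hk (ha.ne hj hk hjk)
  refine ⟨nonempty c, fun s => nonempty _, fun ε hε => ?_⟩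
  have infsep_pos : 0 < (a '' J).infsep :=
    (hJ.image a).infsep_pos_iff_nontrivial.mpr (hJ₂.image_of_injOn ha)
  obtain ⟨η, hη, hη_lt⟩ : ∃ η > 0, 4 * η < ε * (a '' J).infsep :=
    ⟨ε * (a '' J).infsep / 5, by positivity, by linarith [mul_pos hε infsep_pos]⟩
  have eventually_le : ∀ᶠ s in l, ∀ i ∈ J, |δ s i| ≤ η :=
    (eventually_all_finite hJ).mpr fun i hi =>
      ((hδ i hi).abs.eventually_lt_const (by simpa using hη)).mono fun _ => le_of_lt
  filter_upwards [eventually_le] with s hs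
  refine ⟨fun u₁ hu₁ => exists_mem_tropLocus_dist_le_of_abs_sub_le hJ ha (by simpa using hs)
    hη_lt hu₁, fun u₂ hu₂ => ?_⟩
  simp only [dist_comm _ u₂]
  exact exists_mem_tropLocus_dist_le_of_abs_sub_le hJ ha (by simpa using hs) hη_lt hu₂

end AffineFamily

section Lattice

variable {n m : ℕ}

/-- A lattice vector of `ℤ^n`, viewed as a point of Euclidean space. -/
def latticeVec (z : Fin n → ℤ) : EuclideanSpace ℝ (Fin n) :=
  WithLp.toLp 2 fun i => (z i : ℝ)

lemma latticeVec_injective : Function.Injective (latticeVec (n := n)) := fun _ _ h =>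
  funext fun i => Int.cast_injective (congrArg (· i) h)

lemma lfE_eq_affineFamily (v : Fin m → Fin n → ℤ) (lam : Fin m → ℝ) :
    lfE v lam = affineFamily (fun j => latticeVec (v j)) lam := by
  ext j u
  simp [lfE, affineFamily, latticeVec, PiLp.inner_apply, mul_comm]

lemma tropRelE_eq_tropLocus (v : Fin m → Fin n → ℤ) (lam : Fin m → ℝ) (w : Fin n → ℤ) :
    TropRelE v lam w = tropLocus {j | zdot w (v j) ≠ 0}
      (affineFamily (fun j => latticeVec (v j)) lam) := by
  rw [← lfE_eq_affineFamily]
  ext u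
  constructor
  · rintro ⟨j, k, hjk, hj, hk, h_eq, h_min⟩
    exact ⟨j, hj, k, hk, hjk, h_min, fun i hi => h_eq.ge.trans (h_min i hi)⟩
  · rintro ⟨j, hj, k, hk, hjk, hj_min, hk_min⟩
    exact ⟨j, k, hjk, hj, hk, le_antisymm (hj_min hk) (hk_min hj), fun i hi => hj_min hi⟩

end Lattice

/-- With `l_j(u) = ⟨u, v_j⟩ - λ_j` (pairwise distinct primitive `v_j`) and
`l_j^{(i)} = l_j + δ_j^{(i)}` where `δ_j^{(i)} → 0` for each `j`, fix `w ∈ ℤ^n` whose index set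
`J_w` has at least two elements. Then `Trop(P, w)` and each `Trop(P^{(i)}, w)` are nonempty and
`Trop(P^{(i)}, w)` converges to `Trop(P, w)` with respect to the Hausdorff distance. -/
theorem statement10 {n m : ℕ}
    (v : Fin m → Fin n → ℤ) (lam : Fin m → ℝ)
    (hdist : Function.Injective v)
    (hprim : ∀ j, Primitive (v j))
    (δ : ℕ → Fin m → ℝ)
    (hδ : ∀ j, Filter.Tendsto (fun i => δ i j) Filter.atTop (nhds 0))
    (w : Fin n → ℤ)
    (hw : ∃ j₁ j₂ : Fin m, j₁ ≠ j₂ ∧ zdot w (v j₁) ≠ 0 ∧ zdot w (v j₂) ≠ 0) :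
    (TropRelE v lam w).Nonempty ∧
    (∀ i, (TropRelE v (fun j => lam j - δ i j) w).Nonempty) ∧
    ∀ ε > (0 : ℝ), ∃ N : ℕ, ∀ i ≥ N,
      (∀ u₁ ∈ TropRelE v lam w,
        ∃ u₂ ∈ TropRelE v (fun j => lam j - δ i j) w, dist u₁ u₂ ≤ ε) ∧
      (∀ u₂ ∈ TropRelE v (fun j => lam j - δ i j) w,
        ∃ u₁ ∈ TropRelE v lam w, dist u₁ u₂ ≤ ε) := by
  obtain ⟨j, k, hjk, hj, hk⟩ := hw
  simp only [tropRelE_eq_tropLocus, ← eventually_atTop]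
  exact statement10_general (Set.toFinite _) ⟨j, hj, k, hk, hjk⟩
    (latticeVec_injective.comp hdist).injOn lam fun j _ => hδ j
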